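/- arXiv:1612.08439 — 3 statements merged into one kernel-verified Lean document; each statement's English description precedes it below -/
import Mathlib

section
/- Let f be an irrotational homeomorphism of the open annulus 𝔸 = 𝕋¹ × ℝ which preserves a Borel probability measure of full support, and let f̌ be the irrotational lift of f to ℝ². Then the set of bi-recurrent points of f̌ is dense in ℝ². In particular, f̌ is non-wandering: for every nonempty open set Ǔ ⊆ ℝ² there exist a point ž ∈ Ǔ and an integer n ≥ 1 with f̌ⁿ(ž) ∈ Ǔ. -/
open MeasureTheory Filter Topology Set

noncomputable section

/-- The circle `𝕋¹ = ℝ/ℤ`. -/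
abbrev T1 : Type := AddCircle (1 : ℝ)

/-- The open annulus `𝔸 = 𝕋¹ × ℝ`. -/
abbrev Ann : Type := T1 × ℝ

/-- The universal covering map `π : ℝ² → 𝔸`, `π(x,y) = (x + ℤ, y)`. -/
def pA : ℝ × ℝ → Ann := fun z => ((z.1 : T1), z.2)

/-- An open topological disk of `𝔸`: a nonempty open connected simply connected subset. -/
def IsOpenTopDisk (U : Set Ann) : Prop :=
  IsOpen U ∧ IsConnected U ∧ SimplyConnectedSpace U

/-- `f` is isotopic to the identity. -/
def IsotopicToId (f : Ann ≃ₜ Ann) : Prop :=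
  ∃ H : ℝ × Ann → Ann, ContinuousOn H (Set.Icc (0:ℝ) 1 ×ˢ Set.univ) ∧
    (∀ z, H (0, z) = z) ∧ (∀ z, H (1, z) = f z) ∧
    ∀ t ∈ Set.Icc (0:ℝ) 1, ∃ g : Ann ≃ₜ Ann, ∀ z, H (t, z) = g z

/-- `μ` is an `f`-invariant Borel probability measure of full support. -/
def InvariantFullMeasure (f : Ann ≃ₜ Ann) (μ : Measure Ann) : Prop :=
  IsProbabilityMeasure μ ∧ Measure.map f μ = μ ∧
    ∀ U : Set Ann, IsOpen U → U.Nonempty → 0 < μ U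

/-- `fc` is a lift of `f` to the universal covering `ℝ²`. -/
def IsLift (f : Ann ≃ₜ Ann) (fc : (ℝ × ℝ) ≃ₜ (ℝ × ℝ)) : Prop :=
  ∀ z, pA (fc z) = f (pA z)

/-- The rotation set of `fc` relative to a compact set `K`. -/
def rotK (fc : (ℝ × ℝ) ≃ₜ (ℝ × ℝ)) (K : Set Ann) : Set EReal :=
  {ρ | ∃ (z : ℕ → ℝ × ℝ) (n : ℕ → ℕ), Tendsto n atTop atTop ∧
    (∀ k, pA (z k) ∈ K ∧ pA ((⇑fc)^[n k] (z k)) ∈ K) ∧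
    Tendsto (fun k => (((((⇑fc)^[n k] (z k)).1 - (z k).1) / (n k) : ℝ) : EReal))
      atTop (nhds ρ)}

/-- The rotation set of `fc`. -/
def rot (fc : (ℝ × ℝ) ≃ₜ (ℝ × ℝ)) : Set EReal :=
  closure (⋃ (K : Set Ann) (_ : IsCompact K), rotK fc K)

/-- Alternative `(1)` in Theorems A and B: existence of non-contractible
periodic points of arbitrarily large prime period. -/
def NonContractibleAlt (fc : (ℝ × ℝ) ≃ₜ (ℝ × ℝ)) : Prop :=
  ∃ q : ℕ, 1 ≤ q ∧ ∀ r s : ℕ, 0 < r → 0 < s → Nat.Coprime r s → (r : ℝ) / s ≤ 1 / q →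
    (∃ z : ℝ × ℝ, (⇑fc)^[s] z + ((r : ℝ), 0) = z) ∨
    (∃ z : ℝ × ℝ, (⇑fc)^[s] z - ((r : ℝ), 0) = z)

/-- A point `ž` is bi-recurrent for `f̌` if `f̌^{n_k}(ž) → ž` and `f̌^{-m_k}(ž) → ž`
for some sequences `n_k → +∞`, `m_k → +∞`. -/
def IsBiRecurrentPt (fc : (ℝ × ℝ) ≃ₜ (ℝ × ℝ)) (z : ℝ × ℝ) : Prop :=
  (∃ n : ℕ → ℕ, Tendsto n atTop atTop ∧ Tendsto (fun k => (⇑fc)^[n k] z) atTop (𝓝 z)) ∧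
  (∃ m : ℕ → ℕ, Tendsto m atTop atTop ∧ Tendsto (fun k => (⇑fc.symm)^[m k] z) atTop (𝓝 z))

/-!
The measure `μ` lifts to the `σ`-finite measure `ν` on `ℝ²` which counts the points of each fibre of
`π`, and `f̌` preserves `ν`. By Poincaré recurrence it suffices that `f̌` is conservative for `ν`.

For a wandering set `W`, the total time that the orbits starting in `W` spend in a set `S`,
integrated over `W`, is at most `ν S`. If `W` lies in the strip `|x| ≤ r`, irrotationality says that
at a large time `n` most of its points have moved horizontally by at most `ε n`, so up to time `N`
they spend a time of order `N (ν W)` in the strip `|x| ≤ r + ε N`, whose measure is of order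
`r + ε N`. As `N → ∞` and then `ε → 0`, this gives `ν W = 0`.
-/

section Wandering

variable {α : Type*} {T : α → α} {W : Set α}

/-- A set is wandering for `T` if no orbit that starts in it ever comes back to it. -/
def IsWandering (T : α → α) (W : Set α) : Prop :=
  ∀ x ∈ W, ∀ n ≠ 0, T^[n] x ∉ W

namespace IsWandering

lemma disjoint_preimage_iterate_of_lt (hW : IsWandering T W) {m n : ℕ} (hmn : m < n) :
    Disjoint (T^[m] ⁻¹' W) (T^[n] ⁻¹' W) := by
  refine disjoint_left.2 fun x hm hn => hW _ hm (n - m) (by lia) ?_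
  rwa [← Function.iterate_add_apply, Nat.sub_add_cancel hmn.le]

lemma disjoint_preimage_iterate (hW : IsWandering T W) {m n : ℕ} (hmn : m ≠ n) :
    Disjoint (T^[m] ⁻¹' W) (T^[n] ⁻¹' W) := by
  rcases hmn.lt_or_gt with hlt | hgt
  · exact hW.disjoint_preimage_iterate_of_lt hlt
  · exact (hW.disjoint_preimage_iterate_of_lt hgt).symm

variable [MeasurableSpace α] {ν : Measure α} {S : Set α}

-- The preimages of `W ∩ T^[n] ⁻¹' S` under `T^[N - n]`, `n < N`, are disjoint parts of
-- `T^[N] ⁻¹' S`.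
lemma tsum_measure_inter_preimage_iterate_le (hW : IsWandering T W) (hT : MeasurePreserving T ν ν)
    (hWm : MeasurableSet W) (hS : MeasurableSet S) :
    ∑' n, ν (W ∩ T^[n] ⁻¹' S) ≤ ν S := by
  refine ENNReal.tsum_le_of_sum_range_le fun N => ?_
  have hmeas (n : ℕ) : MeasurableSet (W ∩ T^[n] ⁻¹' S) :=
    hWm.inter ((hT.iterate n).measurable hS)
  have hdisj : (Finset.range N : Set ℕ).PairwiseDisjoint
      fun n => T^[N - n] ⁻¹' (W ∩ T^[n] ⁻¹' S) := by
    intro m hm n hn hmn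
    rw [Finset.mem_coe, Finset.mem_range] at hm hn
    exact (hW.disjoint_preimage_iterate (show N - m ≠ N - n by lia)).mono
      (preimage_mono inter_subset_left) (preimage_mono inter_subset_left)
  calc ∑ n ∈ Finset.range N, ν (W ∩ T^[n] ⁻¹' S)
      = ∑ n ∈ Finset.range N, ν (T^[N - n] ⁻¹' (W ∩ T^[n] ⁻¹' S)) :=
        Finset.sum_congr rfl fun n _ =>
          ((hT.iterate (N - n)).measure_preimage (hmeas n).nullMeasurableSet).symm
    _ = ν (⋃ n ∈ Finset.range N, T^[N - n] ⁻¹' (W ∩ T^[n] ⁻¹' S)) :=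
        (measure_biUnion_finset hdisj fun n _ => (hT.iterate (N - n)).measurable (hmeas n)).symm
    _ ≤ ν (T^[N] ⁻¹' S) := by
        refine measure_mono (iUnion₂_subset fun n hn x hx => ?_)
        have hxS : T^[n] (T^[N - n] x) ∈ S := hx.2
        rwa [← Function.iterate_add_apply, Nat.add_sub_cancel' (Finset.mem_range.1 hn).le] at hxS
    _ = ν S := (hT.iterate N).measure_preimage hS.nullMeasurableSet

end IsWandering

end Wandering

section Displacement

lemma le_of_forall_nat_mul_le_add_mul {R : Type*} [Field R] [LinearOrder R] [IsStrictOrderedRing R]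
    [Archimedean R] {a b c : R} (h : ∀ n : ℕ, n * c ≤ a + n * b) : c ≤ b := by
  by_contra! hbc
  obtain ⟨n, hn⟩ := exists_nat_gt (a / (c - b))
  rw [div_lt_iff₀ (sub_pos.2 hbc)] at hn
  linarith [h n]

variable {α : Type*} [MeasurableSpace α] {ν : Measure α} {T : α → α} {h : α → ℝ} {W : Set α}
  {r ε : ℝ} {C : NNReal}

lemma eventually_half_le_measure_inter_preimage_iterate
    (hdisp : TendstoInMeasure (ν.restrict {x | |h x| ≤ r})
      (fun (n : ℕ) x => (h (T^[n] x) - h x) / n) atTop 0)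
    (hWr : W ⊆ {x | |h x| ≤ r}) (hW : ν W ≠ ⊤) (hε : 0 < ε) :
    ∀ᶠ n : ℕ in atTop, ν W / 2 ≤ ν (W ∩ T^[n] ⁻¹' {x | |h x| ≤ r + ε * n}) := by
  rcases eq_or_ne (ν W) 0 with hW0 | hW0
  · simp [hW0]
  have hbad := (tendstoInMeasure_iff_norm.1 hdisp ε hε).eventually_le_const
    (ENNReal.half_pos hW0)
  filter_upwards [hbad, eventually_gt_atTop 0] with n hbad_n hn
  set far := {x | ε ≤ ‖(h (T^[n] x) - h x) / n - (0 : α → ℝ) x‖}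
  have hcover : W ⊆ (W ∩ T^[n] ⁻¹' {x | |h x| ≤ r + ε * n}) ∪ (far ∩ {x | |h x| ≤ r}) := by
    intro x hx
    rw [mem_union, or_iff_not_imp_right]
    intro hnear
    have hdist : |h (T^[n] x) - h x| < ε * n := by
      rw [← div_lt_iff₀ (by positivity)]
      simpa [far, hWr hx] using hnear
    have hxr : |h x| ≤ r := hWr hx
    refine ⟨hx, ?_⟩
    calc |h (T^[n] x)| = |h x + (h (T^[n] x) - h x)| := by rw [add_sub_cancel]
      _ ≤ |h x| + |h (T^[n] x) - h x| := abs_add_le _ _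
      _ ≤ r + ε * n := by linarith
  have hsum : ν W ≤ ν (W ∩ T^[n] ⁻¹' {x | |h x| ≤ r + ε * n}) + ν W / 2 :=
    (measure_mono hcover).trans <| (measure_union_le _ _).trans <|
      add_le_add_right ((Measure.le_restrict_apply _ _).trans hbad_n) _
  rw [← ENNReal.sub_half hW]
  exact tsub_le_iff_right.2 hsum

lemma IsWandering.half_measure_toReal_le_mul (hW : IsWandering T W) (hT : MeasurePreserving T ν ν)
    (hh : Measurable h)
    (hgrowth : ∀ s ≥ 0, ν {x | |h x| ≤ s} ≤ C * ENNReal.ofReal (s + 1))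
    (hdisp : TendstoInMeasure (ν.restrict {x | |h x| ≤ r})
      (fun (n : ℕ) x => (h (T^[n] x) - h x) / n) atTop 0)
    (hr : 0 ≤ r) (hWm : MeasurableSet W) (hWr : W ⊆ {x | |h x| ≤ r}) (hε : 0 < ε) :
    (ν W / 2).toReal ≤ C * ε := by
  have hW_top : ν W ≠ ⊤ :=
    ne_top_of_le_ne_top (by finiteness) ((measure_mono hWr).trans (hgrowth r hr))
  obtain ⟨N, hN⟩ := eventually_atTop.1 <|
    eventually_half_le_measure_inter_preimage_iterate hdisp hWr hW_top hε
  refine le_of_forall_nat_mul_le_add_mul (a := C * (r + ε * N + 1)) fun k => ?_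
  set S := {x | |h x| ≤ r + ε * ↑(N + k)}
  have hS : MeasurableSet S := measurableSet_le hh.abs measurable_const
  have hocc : k * (ν W / 2) ≤ C * ENNReal.ofReal (r + ε * ↑(N + k) + 1) :=
    calc k * (ν W / 2)
        = ∑ n ∈ Finset.Ico N (N + k), ν W / 2 := by simp
      _ ≤ ∑ n ∈ Finset.Ico N (N + k), ν (W ∩ T^[n] ⁻¹' S) := by
          refine Finset.sum_le_sum fun n hn => ?_
          obtain ⟨hNn, hnk⟩ := Finset.mem_Ico.1 hn
          refine (hN n hNn).trans (measure_mono ?_)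
          refine inter_subset_inter_right _ (preimage_mono fun x (hx : |h x| ≤ r + ε * n) => ?_)
          exact hx.trans (by gcongr)
      _ ≤ ∑' n, ν (W ∩ T^[n] ⁻¹' S) := ENNReal.sum_le_tsum _
      _ ≤ ν S := hW.tsum_measure_inter_preimage_iterate_le hT hWm hS
      _ ≤ C * ENNReal.ofReal (r + ε * ↑(N + k) + 1) := hgrowth _ (by positivity)
  have hocc_real := ENNReal.toReal_mono (by finiteness) hocc
  rw [ENNReal.toReal_mul, ENNReal.toReal_mul, ENNReal.toReal_ofReal (by positivity),
    ENNReal.toReal_natCast, ENNReal.coe_toReal] at hocc_real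
  push_cast at hocc_real
  linarith

lemma IsWandering.measure_eq_zero_of_tendstoInMeasure_displacement (hW : IsWandering T W)
    (hT : MeasurePreserving T ν ν) (hh : Measurable h)
    (hgrowth : ∀ s ≥ 0, ν {x | |h x| ≤ s} ≤ C * ENNReal.ofReal (s + 1))
    (hdisp : TendstoInMeasure (ν.restrict {x | |h x| ≤ r})
      (fun (n : ℕ) x => (h (T^[n] x) - h x) / n) atTop 0)
    (hr : 0 ≤ r) (hWm : MeasurableSet W) (hWr : W ⊆ {x | |h x| ≤ r}) :
    ν W = 0 := by
  have hW_top : ν W ≠ ⊤ :=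
    ne_top_of_le_ne_top (by finiteness) ((measure_mono hWr).trans (hgrowth r hr))
  have hhalf : (ν W / 2).toReal ≤ 0 := by
    refine le_of_forall_pos_le_add fun η hη => ?_
    calc (ν W / 2).toReal
        ≤ C * (η / (C + 1)) :=
          hW.half_measure_toReal_le_mul hT hh hgrowth hdisp hr hWm hWr (by positivity)
      _ = η * (C / (C + 1)) := by ring
      _ ≤ η * 1 := by gcongr; exact div_le_one_of_le₀ (by linarith) (by positivity)
      _ = 0 + η := by ring
  simpa [ENNReal.toReal_eq_zero_iff, hW_top] using
    hhalf.antisymm ENNReal.toReal_nonneg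

theorem conservative_of_tendstoInMeasure_displacement (hT : MeasurePreserving T ν ν)
    (hh : Measurable h)
    (hgrowth : ∀ s ≥ 0, ν {x | |h x| ≤ s} ≤ C * ENNReal.ofReal (s + 1))
    (hdisp : ∀ r ≥ 0, TendstoInMeasure (ν.restrict {x | |h x| ≤ r})
      (fun (n : ℕ) x => (h (T^[n] x) - h x) / n) atTop 0) :
    Conservative T ν := by
  refine ⟨hT.quasiMeasurePreserving, fun s hs hs0 => ?_⟩
  by_contra! hwand
  have hnull (r : ℕ) : ν (s ∩ {x | |h x| ≤ r}) = 0 :=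
    IsWandering.measure_eq_zero_of_tendstoInMeasure_displacement
      (fun x hx n hn hxn => hwand x hx.1 n hn hxn.1) hT hh hgrowth (hdisp r r.cast_nonneg)
      r.cast_nonneg (hs.inter (measurableSet_le hh.abs measurable_const)) inter_subset_right
  refine hs0 (measure_mono_null (fun x hx => ?_) (measure_iUnion_null hnull))
  obtain ⟨r, hr⟩ := exists_nat_ge |h x|
  exact mem_iUnion.2 ⟨r, hx, hr⟩

end Displacement

section Inverse

variable {α : Type*} [MeasurableSpace α] {ν : Measure α}

lemma conservative_symm {e : α ≃ᵐ α} (he : Conservative e ν)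
    (hsymm : Measure.QuasiMeasurePreserving e.symm ν ν) : Conservative e.symm ν := by
  refine ⟨hsymm, fun s hs hs0 => ?_⟩
  obtain ⟨x, hx, n, hn, hxn⟩ := he.exists_mem_iterate_mem' hs hs0
  refine ⟨_, hxn, n, hn, ?_⟩
  rwa [Function.LeftInverse.iterate e.symm_apply_apply n x]

end Inverse

section SkewProduct

variable {X ι : Type*}

lemma bijective_snd_of_fst_eq {T : X × ι ≃ X × ι} {f : X → X} (hf : f.Injective)
    (hfst : ∀ q, (T q).1 = f q.1) (x : X) : Function.Bijective fun i => (T (x, i)).2 := by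
  refine ⟨fun i j hij => ?_, fun k => ?_⟩
  · have : T (x, i) = T (x, j) := Prod.ext (by rw [hfst, hfst]) hij
    exact congrArg Prod.snd (T.injective this)
  · obtain ⟨⟨x', i⟩, hi⟩ := T.surjective (f x, k)
    obtain rfl : x' = x := hf (by rw [← hfst (x', i), hi])
    exact ⟨i, congrArg Prod.snd hi⟩

variable [MeasurableSpace X] [MeasurableSpace ι] {μ : Measure X}

lemma map_count_of_bijective {κ : Type*} [MeasurableSpace κ] {g : ι → κ} (hg : g.Bijective)
    (hgm : Measurable g) : Measure.count.map g = Measure.count := by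
  ext s hs
  rw [Measure.map_apply hgm hs, Measure.count_apply (hgm hs), Measure.count_apply hs,
    encard_preimage_of_bijective hg]

lemma measurePreserving_prod_count_of_fst_eq [Countable ι] [MeasurableSingletonClass ι] [SFinite μ]
    {T : X × ι ≃ᵐ X × ι} {f : X → X} (hf : MeasurePreserving f μ μ) (hinj : f.Injective)
    (hfst : ∀ q, (T q).1 = f q.1) :
    MeasurePreserving T (μ.prod Measure.count) (μ.prod Measure.count) := by
  have hsnd : Measurable fun q => (T q).2 := measurable_snd.comp T.measurable
  have hskew := hf.skew_product (g := fun x i => (T (x, i)).2) (μc := .count) (μd := .count) hsnd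
    (ae_of_all _ fun x => map_count_of_bijective
      (bijective_snd_of_fst_eq (T := T.toEquiv) hinj hfst x) (hsnd.comp measurable_prodMk_left))
  convert hskew using 1
  exact funext fun q => Prod.ext (hfst q) rfl

end SkewProduct

section LiftMeasure

/-- The annulus cut open along the generator `{0} × ℝ`: a point of the plane is determined by its
projection to the annulus and by the integer part of its first coordinate. -/
def planeEquiv : ℝ × ℝ ≃ᵐ Ann × ℤ where
  toFun w := (pA w, ⌊w.1⌋)
  invFun q := (AddCircle.equivIco (1 : ℝ) 0 q.1.1 + q.2, q.1.2)
  left_inv w := by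
    simp [pA, AddCircle.coe_equivIco_mk_apply]
  right_inv := by
    rintro ⟨⟨a, y⟩, j⟩
    obtain ⟨h0, h1⟩ := (AddCircle.equivIco (1 : ℝ) 0 a).2
    have hfloor : ⌊(AddCircle.equivIco (1 : ℝ) 0 a : ℝ)⌋ = 0 :=
      Int.floor_eq_zero_iff.2 ⟨h0, by simpa using h1⟩
    simp [pA, hfloor, AddCircle.coe_equivIco]
  measurable_toFun :=
    ((AddCircle.measurable_mk'.comp measurable_fst).prodMk measurable_snd).prodMk
      (Int.measurable_floor.comp measurable_fst)
  measurable_invFun := by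
    have hsection : Measurable fun a : T1 => (AddCircle.equivIco (1 : ℝ) 0 a : ℝ) :=
      measurable_subtype_coe.comp (AddCircle.measurableEquivIco (1 : ℝ) 0).measurable
    exact ((hsection.comp (measurable_fst.comp measurable_fst)).add
      (Measurable.of_discrete.comp measurable_snd)).prodMk (measurable_snd.comp measurable_fst)

/-- The lift of a measure on the annulus to the plane. It gives a set `A` the integral of the number
of points of `A` above `z`. -/
def liftMeasure (μ : Measure Ann) : Measure (ℝ × ℝ) :=
  (μ.prod Measure.count).map planeEquiv.symm

variable {μ : Measure Ann}

lemma measurePreserving_planeEquiv : MeasurePreserving planeEquiv (liftMeasure μ) (μ.prod .count) :=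
  (planeEquiv.symm.measurable.measurePreserving _).symm

lemma card_Icc_floor_neg_floor_le {r : ℝ} (hr : 0 ≤ r) :
    ((Finset.Icc ⌊-r⌋ ⌊r⌋).card : ENNReal) ≤ ENNReal.ofReal (2 * (r + 1)) := by
  have hle : ⌊-r⌋ ≤ ⌊r⌋ + 1 := (Int.floor_mono (by linarith)).trans (by simp)
  have hcard : ((Finset.Icc ⌊-r⌋ ⌊r⌋).card : ℝ) = ⌊r⌋ + 1 - ⌊-r⌋ := by
    exact_mod_cast Int.card_Icc_of_le _ _ hle
  rw [← ENNReal.ofReal_natCast]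
  refine ENNReal.ofReal_le_ofReal ?_
  linarith [Int.floor_le r, Int.lt_floor_add_one (-r)]

lemma liftMeasure_strip_inter_preimage_le {r : ℝ} (hr : 0 ≤ r) (B : Set Ann) :
    liftMeasure μ ({w | |w.1| ≤ r} ∩ pA ⁻¹' B) ≤ 2 * μ B * ENNReal.ofReal (r + 1) := by
  have hsub : {w | |w.1| ≤ r} ∩ pA ⁻¹' B ⊆ planeEquiv ⁻¹' (B ×ˢ Finset.Icc ⌊-r⌋ ⌊r⌋) := by
    rintro w ⟨hw : |w.1| ≤ r, hwB⟩
    obtain ⟨hlower, hupper⟩ := abs_le.1 hw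
    exact ⟨hwB, Finset.mem_coe.2 <|
      Finset.mem_Icc.2 ⟨Int.floor_mono hlower, Int.floor_mono hupper⟩⟩
  calc liftMeasure μ ({w | |w.1| ≤ r} ∩ pA ⁻¹' B)
      ≤ liftMeasure μ (planeEquiv ⁻¹' (B ×ˢ Finset.Icc ⌊-r⌋ ⌊r⌋)) := measure_mono hsub
    _ = μ B * (Finset.Icc ⌊-r⌋ ⌊r⌋).card := by
        rw [measurePreserving_planeEquiv.measure_preimage_equiv, Measure.prod_prod,
          Measure.count_apply_finset]
    _ ≤ μ B * ENNReal.ofReal (2 * (r + 1)) := by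
        gcongr
        exact card_Icc_floor_neg_floor_le hr
    _ = 2 * μ B * ENNReal.ofReal (r + 1) := by
        rw [ENNReal.ofReal_mul zero_le_two, ENNReal.ofReal_ofNat]
        ring

lemma measure_image_eq_zero_of_liftMeasure_eq_zero {A : Set (ℝ × ℝ)}
    (hA : MeasurableSet A) (h0 : liftMeasure μ A = 0) : μ (pA '' A) = 0 := by
  rw [liftMeasure, planeEquiv.symm.map_apply,
    Measure.measure_prod_null (planeEquiv.symm.measurable hA)] at h0
  refine measure_mono_null ?_ h0
  rintro _ ⟨w, hw, rfl⟩
  refine Measure.count_ne_zero_iff.2 ⟨⌊w.1⌋, ?_⟩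
  rwa [mem_preimage, mem_preimage, show (pA w, ⌊w.1⌋) = planeEquiv w from rfl,
    planeEquiv.symm_apply_apply]

instance isOpenPosMeasure_liftMeasure [μ.IsOpenPosMeasure] :
    (liftMeasure μ).IsOpenPosMeasure := by
  refine ⟨fun U hU hne h0 => ?_⟩
  have hopen : IsOpenMap pA := QuotientAddGroup.isOpenMap_coe.prodMap IsOpenMap.id
  exact (hopen U hU).measure_ne_zero μ (hne.image _)
    (measure_image_eq_zero_of_liftMeasure_eq_zero hU.measurableSet h0)

lemma measurePreserving_liftMeasure [SFinite μ] {f : Ann ≃ₜ Ann} {fc : (ℝ × ℝ) ≃ₜ (ℝ × ℝ)}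
    (hf : MeasurePreserving f μ μ) (hlift : IsLift f fc) :
    MeasurePreserving fc (liftMeasure μ) (liftMeasure μ) := by
  set T : Ann × ℤ ≃ᵐ Ann × ℤ := (planeEquiv.symm.trans fc.toMeasurableEquiv).trans planeEquiv
  have hT : MeasurePreserving T (μ.prod .count) (μ.prod .count) := by
    refine measurePreserving_prod_count_of_fst_eq hf f.injective fun q => ?_
    have hq : pA (planeEquiv.symm q) = q.1 := congrArg Prod.fst (planeEquiv.apply_symm_apply q)
    rw [← hq]
    exact hlift _
  convert (measurePreserving_planeEquiv.symm.comp hT).comp measurePreserving_planeEquiv using 1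
  ext1 w
  simp [T]

end LiftMeasure

section Rotation

variable {f : Ann ≃ₜ Ann} {fc : (ℝ × ℝ) ≃ₜ (ℝ × ℝ)} {μ : Measure Ann}

lemma IsLift.iterate (hlift : IsLift f fc) (n : ℕ) (z : ℝ × ℝ) :
    pA (fc^[n] z) = f^[n] (pA z) :=
  Function.Semiconj.iterate_right (f := pA) hlift n z

lemma eventually_mean_displacement_mem_of_rotK_subset {K : Set Ann} {V : Set EReal} (hV : IsOpen V)
    (hKV : rotK fc K ⊆ V) :
    ∀ᶠ n : ℕ in atTop, ∀ z, pA z ∈ K → pA (fc^[n] z) ∈ K →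
      ((((fc^[n] z).1 - z.1) / n : ℝ) : EReal) ∈ V := by
  by_contra hcon
  obtain ⟨n, hn, hbad⟩ := extraction_of_frequently_atTop (not_eventually.1 hcon)
  push Not at hbad
  choose z hz hz' hzV using hbad
  obtain ⟨ρ, φ, hφ, hlim⟩ := CompactSpace.tendsto_subseq
    fun k => ((((fc^[n k] (z k)).1 - (z k).1) / n k : ℝ) : EReal)
  have hρ : ρ ∈ rotK fc K := ⟨z ∘ φ, n ∘ φ, hn.tendsto_atTop.comp hφ.tendsto_atTop,
    fun k => ⟨hz _, hz' _⟩, hlim⟩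
  obtain ⟨k, hk⟩ := (hlim.eventually_mem (hV.mem_nhds (hKV hρ))).exists
  exact hzV _ hk

lemma eventually_abs_mean_displacement_lt {K : Set Ann} (hK : rotK fc K ⊆ {0}) {ε : ℝ}
    (hε : 0 < ε) :
    ∀ᶠ n : ℕ in atTop, ∀ z, pA z ∈ K → pA (fc^[n] z) ∈ K → |((fc^[n] z).1 - z.1) / n| < ε := by
  have hV : rotK fc K ⊆ Ioo ((-ε : ℝ) : EReal) ε :=
    hK.trans (singleton_subset_iff.2 ⟨by exact_mod_cast neg_lt_zero.2 hε, by exact_mod_cast hε⟩)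
  filter_upwards [eventually_mean_displacement_mem_of_rotK_subset isOpen_Ioo hV] with n hn z hz hz'
  exact abs_lt.2 ⟨EReal.coe_lt_coe_iff.1 (hn z hz hz').1, EReal.coe_lt_coe_iff.1 (hn z hz hz').2⟩

lemma rotK_subset_rot {K : Set Ann} (hK : IsCompact K) : rotK fc K ⊆ rot fc :=
  (subset_iUnion₂ (s := fun K (_ : IsCompact K) => rotK fc K) K hK).trans subset_closure

lemma tendstoInMeasure_mean_displacement [IsFiniteMeasure μ] (hf : MeasurePreserving f μ μ)
    (hlift : IsLift f fc) (hrot : rot fc ⊆ {0}) {r : ℝ} (hr : 0 ≤ r) :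
    TendstoInMeasure ((liftMeasure μ).restrict {w | |w.1| ≤ r})
      (fun (n : ℕ) w => ((fc^[n] w).1 - w.1) / n) atTop 0 := by
  refine tendstoInMeasure_iff_norm.2 fun ε hε => ENNReal.tendsto_nhds_zero.2 fun η hη => ?_
  obtain ⟨K, hK, hμK⟩ := isTightMeasureSet_iff_exists_isCompact_measure_compl_le.1
    (isTightMeasureSet_singleton (μ := μ)) (η / (4 * ENNReal.ofReal (r + 1)))
    (ENNReal.div_pos hη.ne' (by finiteness))
  filter_upwards [eventually_abs_mean_displacement_lt
    ((rotK_subset_rot hK).trans hrot) hε] with n hn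
  set far := {w | ε ≤ ‖((fc^[n] w).1 - w.1) / n - (0 : ℝ × ℝ → ℝ) w‖}
  have hfar : far ∩ {w | |w.1| ≤ r} ⊆ {w | |w.1| ≤ r} ∩ pA ⁻¹' (Kᶜ ∪ f^[n] ⁻¹' Kᶜ) := by
    rintro w ⟨hw, hwr⟩
    refine ⟨hwr, ?_⟩
    by_contra hwK
    simp only [mem_preimage, mem_union, mem_compl_iff, not_or, not_not] at hwK
    refine (hn w hwK.1 (by rw [hlift.iterate]; exact hwK.2)).not_ge ?_
    rwa [mem_ofPred, Pi.zero_apply, sub_zero] at hw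
  have hstrip : MeasurableSet {w : ℝ × ℝ | |w.1| ≤ r} :=
    measurableSet_le measurable_fst.abs measurable_const
  calc (liftMeasure μ).restrict {w | |w.1| ≤ r} far
      = liftMeasure μ (far ∩ {w | |w.1| ≤ r}) := Measure.restrict_apply' hstrip
    _ ≤ 2 * μ (Kᶜ ∪ f^[n] ⁻¹' Kᶜ) * ENNReal.ofReal (r + 1) :=
        (measure_mono hfar).trans (liftMeasure_strip_inter_preimage_le hr _)
    _ ≤ 2 * (μ Kᶜ + μ (f^[n] ⁻¹' Kᶜ)) * ENNReal.ofReal (r + 1) := by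
        gcongr
        exact measure_union_le _ _
    _ = μ Kᶜ * (4 * ENNReal.ofReal (r + 1)) := by
        rw [(hf.iterate n).measure_preimage hK.measurableSet.compl.nullMeasurableSet]
        ring
    _ ≤ η := ENNReal.mul_le_of_le_div (hμK μ rfl)

theorem conservative_liftMeasure [IsFiniteMeasure μ] (hf : MeasurePreserving f μ μ)
    (hlift : IsLift f fc) (hrot : rot fc ⊆ {0}) : Conservative fc (liftMeasure μ) := by
  refine conservative_of_tendstoInMeasure_displacement (C := 2 * (μ univ).toNNReal)
    (measurePreserving_liftMeasure hf hlift) measurable_fst (fun r hr => ?_)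
    fun r hr => tendstoInMeasure_mean_displacement hf hlift hrot hr
  simpa using liftMeasure_strip_inter_preimage_le (μ := μ) hr univ

end Rotation

section Recurrence

variable {fc : (ℝ × ℝ) ≃ₜ (ℝ × ℝ)}

lemma IsBiRecurrentPt.exists_iterate_mem {z : ℝ × ℝ} (hz : IsBiRecurrentPt fc z)
    {U : Set (ℝ × ℝ)} (hU : U ∈ 𝓝 z) : ∃ n : ℕ, 1 ≤ n ∧ fc^[n] z ∈ U := by
  obtain ⟨⟨n, hn, hlim⟩, -⟩ := hz
  obtain ⟨k, hk, hkU⟩ := ((hn.eventually_ge_atTop 1).and (hlim.eventually_mem hU)).exists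
  exact ⟨n k, hk, hkU⟩

lemma exists_tendsto_iterate_of_frequently {α : Type*} [TopologicalSpace α]
    [FirstCountableTopology α] {g : α → α} {z : α}
    (h : ∀ s ∈ 𝓝 z, ∃ᶠ n in atTop, g^[n] z ∈ s) :
    ∃ n : ℕ → ℕ, Tendsto n atTop atTop ∧ Tendsto (fun k => g^[n k] z) atTop (𝓝 z) := by
  obtain ⟨n, hn, hlim⟩ := (mapClusterPt_iff_frequently.2 h).tendsto_subseq
  exact ⟨n, hn.tendsto_atTop, hlim⟩

lemma ae_isBiRecurrentPt {ν : Measure (ℝ × ℝ)} (hfc : MeasurePreserving fc ν ν)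
    (hcons : Conservative fc ν) : ∀ᵐ z ∂ν, IsBiRecurrentPt fc z := by
  have hsymm : Conservative fc.symm ν := conservative_symm (e := fc.toMeasurableEquiv) hcons
    (MeasurePreserving.symm fc.toMeasurableEquiv hfc).quasiMeasurePreserving
  filter_upwards [hcons.ae_frequently_mem_of_mem_nhds, hsymm.ae_frequently_mem_of_mem_nhds]
    with z hforward hbackward
  exact ⟨exists_tendsto_iterate_of_frequently hforward,
    exists_tendsto_iterate_of_frequently hbackward⟩

end Recurrence

theorem theorem_C_general {f : Ann ≃ₜ Ann} {μ : Measure Ann} {fc : (ℝ × ℝ) ≃ₜ (ℝ × ℝ)}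
    (hμ : InvariantFullMeasure f μ) (hlift : IsLift f fc) (hrot : rot fc = {0}) :
    Dense {z : ℝ × ℝ | IsBiRecurrentPt fc z} ∧
      ∀ U : Set (ℝ × ℝ), IsOpen U → U.Nonempty → ∃ z ∈ U, ∃ n : ℕ, 1 ≤ n ∧ fc^[n] z ∈ U := by
  obtain ⟨_, hinv, hpos⟩ := hμ
  have : μ.IsOpenPosMeasure := ⟨fun U hU hne => (hpos U hU hne).ne'⟩
  have hf : MeasurePreserving f μ μ := ⟨f.measurable, hinv⟩
  have hdense : Dense {z | IsBiRecurrentPt fc z} :=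
    Measure.dense_of_ae <| ae_isBiRecurrentPt (measurePreserving_liftMeasure hf hlift)
      (conservative_liftMeasure hf hlift hrot.subset)
  refine ⟨hdense, fun U hU hne => ?_⟩
  obtain ⟨z, hzU, hz⟩ := hdense.inter_open_nonempty U hU hne
  exact ⟨z, hzU, hz.exists_iterate_mem (hU.mem_nhds hzU)⟩

/-- **Theorem C.** -/
theorem theorem_C (f : Ann ≃ₜ Ann) (μ : Measure Ann)
    (hiso : IsotopicToId f) (hμ : InvariantFullMeasure f μ)
    (fc : (ℝ × ℝ) ≃ₜ (ℝ × ℝ)) (hlift : IsLift f fc)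
    (hirr : rot fc = {(0 : EReal)}) :
    Dense {z : ℝ × ℝ | IsBiRecurrentPt fc z} ∧
      ∀ U : Set (ℝ × ℝ), IsOpen U → U.Nonempty →
        ∃ z ∈ U, ∃ n : ℕ, 1 ≤ n ∧ (⇑fc)^[n] z ∈ U := by
  exact theorem_C_general hμ hlift hirr
end
end

section
/- Let K ⊆ ℝ² be a path-connected set such that K ∩ (K + (1,0)) = ∅. Then for every integer j ≠ 0 one has K ∩ (K + (j,0)) = ∅. -/
open Set

/-!
This is Hopf's universal chord theorem: a planar path `g` from `z` to `z + (a + b, 0)` with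
`a, b > 0` has a horizontal chord of length `a` or one of length `b`. Let `g i` be a highest and
`g k` a lowest point of `g`, and let `w = (a + b, 0)`. Following `g` from `g i` to its end, and then
`g + w` from its start, which is the same point, leads from `g i` to `g k + w`. The part of `g`
between `g i` and `g k`, shifted by `(a, 0)`, starts to the right of this path, ends to the left of
it, and stays in the same horizontal strip, so the two cross. A crossing is a chord of length `a` of
`g` when it lies on `g`, and a chord of length `b` when it lies on `g + w`.

Two such paths `u`, `v` cross because otherwise `(s, t) ↦ u s - v t` would have a continuous
argument on the square. Starting with argument `0` at `(0, 0)`, the argument at `(1, 1)` would be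
nonnegative by going around one half of the boundary and nonpositive by going around the other,
whereas `u 1 - v 1` is a negative real number.
-/

section PlaneTopology

open Complex unitInterval

variable {X : Type*} [TopologicalSpace X]

theorem nonneg_of_sin_nonneg_of_isPreconnected {S : Set X} (hS : IsPreconnected S) {θ : X → ℝ}
    (hθ : ContinuousOn θ S) (hsin : ∀ x ∈ S, 0 ≤ Real.sin (θ x)) {p q : X} (hp : p ∈ S)
    (hq : q ∈ S) (hθp : 0 ≤ θ p) : 0 ≤ θ q := by
  by_contra! hθq
  have hπ := Real.pi_pos
  have hmem : max (θ q) (-(Real.pi / 2)) ∈ θ '' S :=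
    (hS.image θ hθ).Icc_subset (mem_image_of_mem θ hq) (mem_image_of_mem θ hp)
      ⟨le_max_left _ _, max_le (by linarith) (by linarith)⟩
  obtain ⟨x, hx, hθx⟩ := hmem
  have hneg : Real.sin (θ x) < 0 := by
    rw [hθx]
    exact Real.sin_neg_of_neg_of_neg_pi_lt (max_lt hθq (by linarith))
      (lt_max_of_lt_right (by linarith))
  exact hneg.not_ge (hsin x hx)

theorem exists_eq_zero_of_im_nonneg_of_im_nonpos [SimplyConnectedSpace X]
    [LocallyPathConnectedSpace X] {f : X → ℂ} (hf : Continuous f) {U V : Set X}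
    (hU : IsPreconnected U) (hV : IsPreconnected V) (hfU : ∀ x ∈ U, 0 ≤ (f x).im)
    (hfV : ∀ x ∈ V, (f x).im ≤ 0) {p q : X} (hp : p ∈ U ∩ V) (hq : q ∈ U ∩ V)
    (hfp : 0 < (f p).re) (hfq : (f q).re < 0) : ∃ x, f x = 0 := by
  by_contra! hne
  obtain ⟨L, ⟨hLp, hL⟩, -⟩ := isCoveringMapOn_exp.existsUnique_continuousMap_lifts
    (⟨f, hf⟩ : C(X, ℂ)) (exp_log (hne p)) hne
  have hexp (x : X) : f x = exp (L x) := (congrFun hL x).symm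
  have him (x : X) : (f x).im = Real.exp (L x).re * Real.sin (L x).im := by rw [hexp, exp_im]
  have harg_p : (L p).im = 0 := by
    rw [hLp, log_im, arg_eq_zero_iff]
    exact ⟨hfp.le, le_antisymm (hfV p hp.2) (hfU p hp.1)⟩
  have harg_q_nonneg : 0 ≤ (L q).im :=
    nonneg_of_sin_nonneg_of_isPreconnected hU (θ := fun x ↦ (L x).im) (by fun_prop)
      (fun x hx ↦ nonneg_of_mul_nonneg_right (him x ▸ hfU x hx) (Real.exp_pos _))
      hp.1 hq.1 harg_p.ge
  have harg_q_nonpos : 0 ≤ -(L q).im :=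
    nonneg_of_sin_nonneg_of_isPreconnected hV (θ := fun x ↦ -(L x).im) (by fun_prop)
      (fun x hx ↦ by
        rw [Real.sin_neg, neg_nonneg]
        exact nonpos_of_mul_nonpos_right (him x ▸ hfV x hx) (Real.exp_pos _))
      hp.2 hq.2 (by simp [harg_p])
  have harg_q : (L q).im = 0 := by linarith
  have hre_pos : 0 < (f q).re := by simp [hexp, exp_re, harg_q, Real.exp_pos]
  exact hfq.not_gt hre_pos

/-- The height bounds force `p.2 = r.2` and `q.2 = s.2`, so both paths lead from the top to the
bottom of the same horizontal strip. -/
theorem exists_apply_eq_apply_of_mem_strip {p q r s : ℝ × ℝ} (u : Path p q) (v : Path r s)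
    (hu : ∀ t, (u t).2 ∈ Icc s.2 r.2) (hv : ∀ t, (v t).2 ∈ Icc q.2 p.2)
    (htop : r.1 < p.1) (hbot : q.1 < s.1) : ∃ x y, u x = v y := by
  have : LocallyPathConnectedSpace I := (convex_Icc (0 : ℝ) 1).locallyPathConnectedSpace
  have : ContractibleSpace I := (convex_Icc (0 : ℝ) 1).contractibleSpace ⟨0, by simp⟩
  let f : I × I → ℂ := fun z ↦ equivRealProdCLM.symm (u z.1 - v z.2)
  have hU : IsPreconnected ({0} ×ˢ univ ∪ univ ×ˢ {1} : Set (I × I)) :=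
    (isPreconnected_singleton.prod isPreconnected_univ).union (0, 1) (by simp) (by simp)
      (isPreconnected_univ.prod isPreconnected_singleton)
  have hV : IsPreconnected (univ ×ˢ {0} ∪ {1} ×ˢ univ : Set (I × I)) :=
    (isPreconnected_univ.prod isPreconnected_singleton).union (1, 0) (by simp) (by simp)
      (isPreconnected_singleton.prod isPreconnected_univ)
  have hfU : ∀ z ∈ ({0} ×ˢ univ ∪ univ ×ˢ {1} : Set (I × I)), 0 ≤ (f z).im := by
    rintro ⟨x, y⟩ (⟨rfl, -⟩ | ⟨-, rfl⟩)
    · simpa [f] using (hv y).2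
    · simpa [f] using (hu x).1
  have hfV : ∀ z ∈ (univ ×ˢ {0} ∪ {1} ×ˢ univ : Set (I × I)), (f z).im ≤ 0 := by
    rintro ⟨x, y⟩ (⟨-, rfl⟩ | ⟨rfl, -⟩)
    · simpa [f] using (hu x).2
    · simpa [f] using (hv y).1
  obtain ⟨⟨x, y⟩, hxy⟩ := exists_eq_zero_of_im_nonneg_of_im_nonpos (f := f) (by fun_prop)
    hU hV hfU hfV (p := (0, 0)) (q := (1, 1)) (by simp) (by simp)
    (by simpa [f] using htop) (by simpa [f] using hbot)
  exact ⟨x, y, sub_eq_zero.mp ((map_eq_zero_iff _ equivRealProdCLM.symm.injective).mp hxy)⟩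

end PlaneTopology

section Chords

theorem exists_path_range_subset_union_translate {E : Type*} [TopologicalSpace E] [Add E]
    [ContinuousAdd E] {z w : E} (g : Path z (z + w)) (i k : unitInterval) :
    ∃ v : Path (g i) (g k + w), range v ⊆ range g ∪ (· + w) '' range g := by
  refine ⟨((g.subpath i 1).cast rfl (by simp)).trans
    ((g.subpath 0 k).map (f := (· + w)) (by fun_prop)), ?_⟩
  rw [Path.trans_range]
  refine union_subset_union ?_ ?_
  · simp
  · rw [Path.map_coe, range_comp, Path.range_subpath]
    exact image_mono (image_subset_range _ _)

theorem exists_horizontal_chord {z : ℝ × ℝ} {a b : ℝ} (ha : 0 < a) (hb : 0 < b)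
    (g : Path z (z + (a + b, 0))) :
    ∃ s t, g t = g s + (a, 0) ∨ g t = g s + (b, 0) := by
  have hheight : Continuous fun t ↦ (g t).2 := by fun_prop
  obtain ⟨i, hi⟩ : ∃ i, ∀ t, (g t).2 ≤ (g i).2 := by
    simpa [IsMaxOn, IsMaxFilter] using
      isCompact_univ.exists_isMaxOn univ_nonempty hheight.continuousOn
  obtain ⟨k, hk⟩ : ∃ k, ∀ t, (g k).2 ≤ (g t).2 := by
    simpa [IsMinOn, IsMinFilter] using
      isCompact_univ.exists_isMinOn univ_nonempty hheight.continuousOn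
  let u := (g.subpath i k).map (f := (· + ((a, 0) : ℝ × ℝ))) (by fun_prop)
  obtain ⟨v, hv⟩ := exists_path_range_subset_union_translate g i k
  have hu_eq (x) : ∃ s, u x = g s + (a, 0) := ⟨_, rfl⟩
  have hv_eq (y) : ∃ t, v y = g t ∨ v y = g t + (a + b, 0) := by
    obtain ⟨t, ht⟩ | ⟨_, ⟨t, rfl⟩, ht⟩ := hv (mem_range_self y)
    exacts [⟨t, .inl ht.symm⟩, ⟨t, .inr ht.symm⟩]
  have hu_strip (x) : (u x).2 ∈ Icc (g k + (a + b, 0)).2 (g i).2 := by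
    obtain ⟨s, hs⟩ := hu_eq x
    simp [hs, hi, hk]
  have hv_strip (y) : (v y).2 ∈ Icc (g k + (a, 0)).2 (g i + (a, 0)).2 := by
    obtain ⟨t, ht | ht⟩ := hv_eq y <;> simp [ht, hi, hk]
  obtain ⟨x, y, hxy⟩ := exists_apply_eq_apply_of_mem_strip u v hu_strip hv_strip
    (by simpa using ha) (by simpa using hb)
  obtain ⟨s, hs⟩ := hu_eq x
  obtain ⟨t, ht | ht⟩ := hv_eq y
  · exact ⟨s, t, .inl (by rw [← ht, ← hxy, hs])⟩
  · have hshift : g s + (a, 0) = g t + (b, 0) + (a, 0) := by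
      rw [← hs, hxy, ht]
      simp [add_assoc, add_comm a b]
    exact ⟨t, s, .inr (add_right_cancel hshift)⟩

/-- `K` meets its translate by `(c, 0)`, i.e. it contains both ends of a horizontal segment of
signed length `c`. -/
def HasHorizontalChord (K : Set (ℝ × ℝ)) (c : ℝ) : Prop :=
  ∃ z ∈ K, z + (c, 0) ∈ K

variable {K : Set (ℝ × ℝ)} {a b c : ℝ}

theorem inter_image_add_eq_empty_iff :
    K ∩ ((fun z : ℝ × ℝ ↦ z + (c, 0)) '' K) = ∅ ↔ ¬ HasHorizontalChord K c := by
  simp only [HasHorizontalChord, eq_empty_iff_forall_notMem, mem_inter_iff, mem_image]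
  grind

namespace HasHorizontalChord

theorem of_neg (h : HasHorizontalChord K (-c)) : HasHorizontalChord K c := by
  obtain ⟨z, hz, hz'⟩ := h
  exact ⟨_, hz', by simpa [add_assoc, ← Prod.zero_eq_mk] using hz⟩

theorem or_of_add (hK : IsPathConnected K) (ha : 0 < a) (hb : 0 < b)
    (h : HasHorizontalChord K (a + b)) : HasHorizontalChord K a ∨ HasHorizontalChord K b := by
  obtain ⟨z, hz, hz'⟩ := h
  obtain ⟨g, hg⟩ := hK.joinedIn z hz _ hz'
  obtain ⟨s, t, hst | hst⟩ := exists_horizontal_chord ha hb g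
  · exact .inl ⟨g s, hg s, hst ▸ hg t⟩
  · exact .inr ⟨g s, hg s, hst ▸ hg t⟩

theorem of_natCast_mul (hK : IsPathConnected K) (hc : 0 < c) {n : ℕ} (hn : n ≠ 0)
    (h : HasHorizontalChord K (n * c)) : HasHorizontalChord K c := by
  induction n, Nat.one_le_iff_ne_zero.mpr hn using Nat.le_induction with
  | base => simpa using h
  | succ n hn_pos ih =>
    have hadd : HasHorizontalChord K (n * c + c) := by simpa [add_mul] using h
    exact (or_of_add hK (by positivity) hc hadd).elim (ih (by lia)) id

theorem of_intCast_mul (hK : IsPathConnected K) (hc : 0 < c) {j : ℤ} (hj : j ≠ 0)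
    (h : HasHorizontalChord K (j * c)) : HasHorizontalChord K c := by
  refine of_natCast_mul hK hc (Int.natAbs_ne_zero.mpr hj) ?_
  rw [Nat.cast_natAbs]
  obtain habs | habs := abs_choice j
  · rwa [habs]
  · refine of_neg ?_
    simpa [habs] using h

end HasHorizontalChord

end Chords

/-- **Lemma 2.9** (after Brown): if a path-connected set `K ⊆ ℝ²` is disjoint from its
translate by `(1,0)`, then it is disjoint from all its nontrivial integer horizontal
translates. -/
theorem pathConnected_disjoint_translates (K : Set (ℝ × ℝ))
    (hK : IsPathConnected K)
    (hdisj : K ∩ ((fun z : ℝ × ℝ => z + (1, 0)) '' K) = ∅) :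
    ∀ j : ℤ, j ≠ 0 → K ∩ ((fun z : ℝ × ℝ => z + ((j : ℝ), 0)) '' K) = ∅ := by
  intro j hj
  rw [inter_image_add_eq_empty_iff] at hdisj ⊢
  intro hchord
  exact hdisj (.of_intCast_mul hK one_pos hj (by simpa using hchord))
end

section
/- Let δ : [0,1] → ℝ² be an injective continuous path whose image is disjoint from its translate by (1,0), i.e. δ([0,1]) ∩ (δ([0,1]) + (1,0)) = ∅. Let γ : [0,1] → ℝ² be a continuous path with γ(0) ∈ δ([0,1]) and γ(1) ∈ δ([0,1]) + (j,0) for some natural number j. Then at least one of the following holds: (i) γ meets its translate γ + (1,0), i.e. there exist s, t ∈ [0,1] with γ(s) = γ(t) + (1,0); or (ii) for every i ∈ {0, 1, …, j}, the image of γ meets δ([0,1]) + (i,0). -/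
open Set

/-!
The proof rests on Hopf's theorem on horizontal chords: if a path-connected planar set `S` has no
horizontal chord of length `a > 0` and none of length `b > 0`, then it has none of length `a + b`.
To see this, take a path `γ` in `S` between the ends of a chord of length `a + b`, and let `β` be
the concatenation of `γ` and `γ + (a + b, 0)`. The function `β s - γ t - a` has no zeros, hence it
has a continuous logarithm. As `β s` runs from `γ t` to `γ t + (a + b, 0)`, this function goes from
`-a` to `b`, and the increment of its logarithm does not depend on `t`. But it stays in the lower
half plane if `γ t` is a highest point of `γ`, and in the upper one if `γ t` is a lowest point.

In particular, a path-connected set disjoint from its translate by `1` is disjoint from all its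
nonzero integer translates. Suppose now that `γ` meets translates of `δ` by integers on both sides
of `i` but misses `δ + i`. Some piece of `γ` runs from `δ + a` to `δ + b` with `a < i < b` and meets
no other integer translate of `δ`. The union of this piece with `δ + a` and `δ + b` has a chord of
length `b - a`, but none of length `1` or `b - a - 1`, contrary to Hopf's theorem.
-/

section ContinuousLogarithm

variable {X : Type*} [TopologicalSpace X]

lemma exists_continuous_exp_eq [SimplyConnectedSpace X] [LocallyPathConnectedSpace X] {g : X → ℂ}
    (hg : Continuous g) (hg₀ : ∀ x, g x ≠ 0) :
    ∃ L : X → ℂ, Continuous L ∧ ∀ x, Complex.exp (L x) = g x := by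
  let x₀ : X := Classical.arbitrary X
  obtain ⟨L, ⟨-, hL⟩, -⟩ := Complex.isCoveringMapOn_exp.existsUnique_continuousMap_lifts
    ⟨g, hg⟩ (a₀ := x₀) (Complex.exp_log (hg₀ x₀)) hg₀
  exact ⟨L, L.continuous, congrFun hL⟩

variable [PreconnectedSpace X]

lemma eq_of_exp_eq_const {L : X → ℂ} (hL : Continuous L) {c : ℂ}
    (hc : ∀ x, Complex.exp (L x) = c) (x y : X) : L x = L y :=
  Complex.isCoveringMap_exp.const_of_comp hL (fun x y => Subtype.ext ((hc x).trans (hc y).symm)) x y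

lemma sub_eq_log_sub_log_of_mem_slitPlane {L : X → ℂ} (hL : Continuous L) {c : ℂ}
    (hc : ∀ x, c * Complex.exp (L x) ∈ Complex.slitPlane) (x y : X) :
    L y - L x = Complex.log (c * Complex.exp (L y)) - Complex.log (c * Complex.exp (L x)) := by
  have hdiff : Continuous fun z => Complex.log (c * Complex.exp (L z)) - L z :=
    (Continuous.clog (by fun_prop) hc).sub hL
  have hexp (z : X) : Complex.exp (Complex.log (c * Complex.exp (L z)) - L z) = c := by
    rw [Complex.exp_sub, Complex.exp_log (Complex.slitPlane_ne_zero (hc z)),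
      mul_div_cancel_right₀ _ (Complex.exp_ne_zero _)]
  linear_combination -eq_of_exp_eq_const hdiff hexp y x

end ContinuousLogarithm

section PlanarChords

variable {γ : ℝ → ℂ} {a b : ℝ}

/- `L` and `M` are the logarithms on the two halves of the concatenated path. They agree up to a
constant where the halves meet, since `γ v - γ t - a = γ u - γ t + b`. -/
lemma exists_log_sub_log_eq (hγ : Continuous γ) (ha : ∀ s t, γ s ≠ γ t + a)
    (hb : ∀ s t, γ s ≠ γ t + b) {u v : ℝ} (huv : γ v = γ u + (a + b)) :
    ∃ N : ℂ, ∀ (c : ℂ) (τ : ℝ), (∀ s, c * (γ s - γ τ - a) ∈ Complex.slitPlane) →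
      (∀ s, c * (γ s - γ τ + b) ∈ Complex.slitPlane) →
      Complex.log (c * b) - Complex.log (c * -a) = N := by
  obtain ⟨L, hLc, hL⟩ := exists_continuous_exp_eq (X := ℝ × ℝ)
    (g := fun x => γ x.1 - γ x.2 - a) (by fun_prop)
    (fun x hx => ha x.1 x.2 (by linear_combination hx))
  obtain ⟨M, hMc, hM⟩ := exists_continuous_exp_eq (X := ℝ × ℝ)
    (g := fun x => γ x.1 - γ x.2 + b) (by fun_prop)
    (fun x hx => hb x.2 x.1 (by linear_combination -hx))
  have hLdiag := eq_of_exp_eq_const (L := fun t => L (t, t)) (by fun_prop) (c := -a) (by simp [hL])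
  have hMdiag := eq_of_exp_eq_const (L := fun t => M (t, t)) (by fun_prop) (c := b) (by simp [hM])
  have hglue := eq_of_exp_eq_const (L := fun t => M (u, t) - L (v, t)) (by fun_prop) (c := 1)
    fun t => by
      rw [Complex.exp_sub, div_eq_one_iff_eq (Complex.exp_ne_zero _), hL, hM]
      linear_combination -huv
  refine ⟨M (0, 0) - L (0, 0) - (M (u, 0) - L (v, 0)), fun c τ hτa hτb => ?_⟩
  have hLτ := sub_eq_log_sub_log_of_mem_slitPlane (L := fun s => L (s, τ)) (by fun_prop)
    (by simpa only [hL] using hτa) τ v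
  have hMτ := sub_eq_log_sub_log_of_mem_slitPlane (L := fun s => M (s, τ)) (by fun_prop)
    (by simpa only [hM] using hτb) u τ
  have hmatch : γ v - γ τ - a = γ u - γ τ + b := by linear_combination huv
  simp only [hL, hM, hmatch, sub_self, zero_sub, zero_add] at hLτ hMτ
  linear_combination hMdiag τ 0 - hLdiag τ 0 - hglue τ 0 - hLτ - hMτ

lemma log_I_mul_sub_log_ne (ha : 0 < a) (hb : 0 < b) :
    Complex.log (Complex.I * b) - Complex.log (Complex.I * -a) ≠
      Complex.log (-Complex.I * b) - Complex.log (-Complex.I * -a) := by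
  have hI := Complex.I_ne_zero
  rw [mul_comm Complex.I, mul_comm (-Complex.I), mul_neg, neg_mul_neg, ← neg_mul,
    mul_comm Complex.I, mul_comm (-Complex.I),
    Complex.log_ofReal_mul hb hI, Complex.log_ofReal_mul ha (neg_ne_zero.2 hI),
    Complex.log_ofReal_mul hb (neg_ne_zero.2 hI), Complex.log_ofReal_mul ha hI,
    Complex.log_I, Complex.log_neg_I]
  intro h
  have : (2 * Real.pi : ℂ) * Complex.I = 0 := by linear_combination h
  simp [Real.pi_ne_zero] at this

lemma mem_slitPlane_of_re_nonneg {z : ℂ} (hz : z ≠ 0) (hre : 0 ≤ z.re) : z ∈ Complex.slitPlane :=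
  Complex.mem_slitPlane_iff.2 <| hre.lt_or_eq.imp_right fun h him => hz (Complex.ext h.symm him)

theorem exists_eq_add_or_exists_eq_add (hγ : Continuous γ) (hγr : IsCompact (range γ))
    (ha : 0 < a) (hb : 0 < b) {u v : ℝ} (huv : γ v = γ u + (a + b)) :
    (∃ s t, γ s = γ t + a) ∨ ∃ s t, γ s = γ t + b := by
  by_contra! h
  obtain ⟨ha', hb'⟩ := h
  have hbdd : IsCompact (range (Complex.im ∘ γ)) := by
    simpa only [range_comp] using hγr.image Complex.continuous_im
  obtain ⟨_, ⟨top, rfl⟩, htop⟩ := hbdd.exists_isGreatest (range_nonempty _)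
  obtain ⟨_, ⟨bot, rfl⟩, hbot⟩ := hbdd.exists_isLeast (range_nonempty _)
  obtain ⟨N, hN⟩ := exists_log_sub_log_eq hγ ha' hb' huv
  have hne_a (s t : ℝ) : γ s - γ t - a ≠ 0 := fun h => ha' s t (by linear_combination h)
  have hne_b (s t : ℝ) : γ s - γ t + b ≠ 0 := fun h => hb' t s (by linear_combination -h)
  have hI := Complex.I_ne_zero
  refine log_I_mul_sub_log_ne ha hb <|
    (hN Complex.I top ?_ ?_).trans (hN (-Complex.I) bot ?_ ?_).symm
  · exact fun s => mem_slitPlane_of_re_nonneg (mul_ne_zero hI (hne_a s top))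
      (by simpa using htop (mem_range_self s))
  · exact fun s => mem_slitPlane_of_re_nonneg (mul_ne_zero hI (hne_b s top))
      (by simpa using htop (mem_range_self s))
  · exact fun s => mem_slitPlane_of_re_nonneg (mul_ne_zero (neg_ne_zero.2 hI) (hne_a s bot))
      (by simpa using hbot (mem_range_self s))
  · exact fun s => mem_slitPlane_of_re_nonneg (mul_ne_zero (neg_ne_zero.2 hI) (hne_b s bot))
      (by simpa using hbot (mem_range_self s))

end PlanarChords

section HorizontalShifts

/-- The real numbers `a` for which the horizontal translate `S + (a, 0)` meets `T`. The elements of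
`horizontalShifts S S` are the signed lengths of the horizontal chords of `S`. -/
def horizontalShifts (S T : Set (ℝ × ℝ)) : Set ℝ :=
  {a | (T ∩ ((fun z : ℝ × ℝ => z + (a, 0)) '' S)).Nonempty}

variable {S T : Set (ℝ × ℝ)} {a b : ℝ}

lemma mem_horizontalShifts : a ∈ horizontalShifts S T ↔ ∃ z ∈ S, z + (a, 0) ∈ T := by
  constructor
  · rintro ⟨_, hzT, z, hzS, rfl⟩
    exact ⟨z, hzS, hzT⟩
  · rintro ⟨z, hzS, hzT⟩
    exact ⟨_, hzT, z, hzS, rfl⟩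

lemma add_mk_sub_eq_of_add_mk_eq {z w : ℝ × ℝ} (h : z + (a, 0) = w + (b, 0)) :
    z + (a - b, 0) = w := by
  rw [← sub_zero (0 : ℝ), ← Prod.mk_sub_mk, ← add_sub_assoc, h, add_sub_cancel_right]

lemma sub_mem_horizontalShifts {z w : ℝ × ℝ} (hz : z ∈ S) (hw : w ∈ T)
    (h : z + (a, 0) = w + (b, 0)) : a - b ∈ horizontalShifts S T :=
  mem_horizontalShifts.2 ⟨z, hz, add_mk_sub_eq_of_add_mk_eq h ▸ hw⟩

lemma neg_mem_horizontalShifts (ha : a ∈ horizontalShifts S T) : -a ∈ horizontalShifts T S := by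
  obtain ⟨z, hzS, hzT⟩ := mem_horizontalShifts.1 ha
  exact zero_sub a ▸ sub_mem_horizontalShifts hzT hzS (add_zero _)

lemma horizontalShifts_mono {S' T' : Set (ℝ × ℝ)} (hS : S ⊆ S') (hT : T ⊆ T') :
    horizontalShifts S T ⊆ horizontalShifts S' T' :=
  fun _ ha => ha.mono (inter_subset_inter hT (image_mono hS))

theorem add_notMem_horizontalShifts (hS : IsPathConnected S) (ha : 0 < a) (hb : 0 < b)
    (haS : a ∉ horizontalShifts S S) (hbS : b ∉ horizontalShifts S S) :
    a + b ∉ horizontalShifts S S := by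
  intro hab
  obtain ⟨p, hp, hq⟩ := mem_horizontalShifts.1 hab
  obtain ⟨γ, hγ⟩ := hS.joinedIn p hp _ hq
  let e := Complex.equivRealProdCLM.symm
  have he (r : ℝ) : e (r, 0) = r := Complex.ext rfl rfl
  have hmem (t : ℝ) : γ.extend t ∈ S := hγ (projIcc 0 1 zero_le_one t)
  have hcompact : IsCompact (range (e ∘ γ.extend)) := by
    rw [range_comp, γ.extend_range]
    exact (isCompact_range γ.continuous).image e.continuous
  have hends : e (γ.extend 1) = e (γ.extend 0) + (a + b) := by
    rw [γ.extend_one, γ.extend_zero, map_add, he, Complex.ofReal_add]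
  have hchord {r : ℝ} (hr : ∃ s t, e (γ.extend s) = e (γ.extend t) + r) :
      r ∈ horizontalShifts S S := by
    obtain ⟨s, t, hst⟩ := hr
    rw [← he, ← map_add, e.injective.eq_iff] at hst
    exact mem_horizontalShifts.2 ⟨_, hmem t, hst ▸ hmem s⟩
  exact (exists_eq_add_or_exists_eq_add (e.continuous.comp γ.continuous_extend) hcompact
    ha hb hends).elim (haS ∘ hchord) (hbS ∘ hchord)

lemma eq_zero_of_intCast_mem_horizontalShifts (hS : IsPathConnected S)
    (hS₁ : 1 ∉ horizontalShifts S S) {k : ℤ} (hk : (k : ℝ) ∈ horizontalShifts S S) : k = 0 := by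
  have hpos (n : ℕ) : (n + 1 : ℝ) ∉ horizontalShifts S S := by
    induction n with
    | zero => simpa using hS₁
    | succ n ih =>
      rw [Nat.cast_succ]
      exact add_notMem_horizontalShifts hS n.cast_add_one_pos one_pos ih hS₁
  have hnat {n : ℕ} (hn : (n : ℝ) ∈ horizontalShifts S S) : n = 0 := by
    cases n with
    | zero => rfl
    | succ n => exact absurd (by simpa using hn) (hpos n)
  obtain ⟨n, rfl | rfl⟩ := k.eq_nat_or_neg
  · exact_mod_cast hnat (by simpa using hk)
  · simpa using hnat (by simpa using neg_mem_horizontalShifts hk)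

end HorizontalShifts

section IntegerTranslates

open scoped Pointwise

variable {S T : Set (ℝ × ℝ)}

/-- The union of the horizontal translates `S + (k, 0)` over the integers `k ∈ K`. -/
def integerTranslates (S : Set (ℝ × ℝ)) (K : Set ℤ) : Set (ℝ × ℝ) :=
  ⋃ k ∈ K, (fun z : ℝ × ℝ => z + ((k : ℝ), 0)) '' S

lemma mem_integerTranslates {K : Set ℤ} {w : ℝ × ℝ} :
    w ∈ integerTranslates S K ↔ ∃ k ∈ K, ∃ z ∈ S, z + ((k : ℝ), 0) = w := by
  simp only [integerTranslates, mem_iUnion, mem_image, exists_prop]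

lemma isClosed_integerTranslates (hS : IsCompact S) (K : Set ℤ) :
    IsClosed (integerTranslates S K) := by
  have hK : IsClosed ((fun k : ℤ => ((k : ℝ), (0 : ℝ))) '' K) := by
    rw [← image_image (fun x : ℝ => (x, (0 : ℝ))) (Int.cast : ℤ → ℝ), ← prod_singleton]
    exact (Int.isClosedEmbedding_coe_real.isClosedMap K (isClosed_discrete K)).prod
      isClosed_singleton
  convert hK.add_left_of_isCompact hS using 1
  rw [integerTranslates, ← iUnion_add_right_image, biUnion_image]

lemma eq_of_add_intCast_eq (hS : ∀ k : ℤ, (k : ℝ) ∈ horizontalShifts S S → k = 0) {z w : ℝ × ℝ}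
    (hz : z ∈ S) (hw : w ∈ S) {k l : ℤ} (h : z + ((k : ℝ), 0) = w + ((l : ℝ), 0)) : k = l :=
  sub_eq_zero.1 <| hS (k - l) <| by exact_mod_cast sub_mem_horizontalShifts hz hw h

lemma mem_sub_of_intCast_mem_horizontalShifts_union
    (hS : ∀ k : ℤ, (k : ℝ) ∈ horizontalShifts S S → k = 0)
    (hT : ∀ k : ℤ, (k : ℝ) ∈ horizontalShifts T T → k = 0) {C : Set ℤ} (hC : C.Nonempty)
    (hST : ∀ k : ℤ, (k : ℝ) ∈ horizontalShifts S T → k ∈ C) {m : ℤ}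
    (hm : (m : ℝ) ∈ horizontalShifts (T ∪ integerTranslates S C) (T ∪ integerTranslates S C)) :
    m ∈ C - C := by
  have mem_of_shift_mem {z : ℝ × ℝ} (hz : z ∈ S) {l : ℤ}
      (h : z + ((l : ℝ), 0) ∈ T ∪ integerTranslates S C) : l ∈ C := by
    obtain hzT | hzS := h
    · exact hST l (mem_horizontalShifts.2 ⟨z, hz, hzT⟩)
    · obtain ⟨c, hc, z', hz', h⟩ := mem_integerTranslates.1 hzS
      exact eq_of_add_intCast_eq hS hz hz' h.symm ▸ hc
  obtain ⟨w, hw, hwm⟩ := mem_horizontalShifts.1 hm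
  obtain hwT | hwS := id hw
  · obtain hwmT | hwmS := hwm
    · obtain ⟨c, hc⟩ := hC
      exact hT m (mem_horizontalShifts.2 ⟨w, hwT, hwmT⟩) ▸ sub_self c ▸ sub_mem_sub hc hc
    · obtain ⟨c, hc, z, hz, h⟩ := mem_integerTranslates.1 hwmS
      have hcm : c - m ∈ C := mem_of_shift_mem hz <| by
        rwa [Int.cast_sub, add_mk_sub_eq_of_add_mk_eq h]
      exact sub_sub_cancel c m ▸ sub_mem_sub hc hcm
  · obtain ⟨c, hc, z, hz, rfl⟩ := mem_integerTranslates.1 hwS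
    have hcm : c + m ∈ C := mem_of_shift_mem hz <| by
      simpa [add_assoc] using hwm
    exact add_sub_cancel_left c m ▸ sub_mem_sub hcm hc

lemma isPathConnected_union_integerTranslates_pair (hS : IsPathConnected S)
    (hT : IsPathConnected T) {a b : ℤ}
    (ha : (a : ℝ) ∈ horizontalShifts S T) (hb : (b : ℝ) ∈ horizontalShifts S T) :
    IsPathConnected (T ∪ integerTranslates S {a, b}) := by
  have htranslate (c : ℤ) : IsPathConnected ((fun z : ℝ × ℝ => z + ((c : ℝ), 0)) '' S) :=
    hS.image (by fun_prop)
  rw [integerTranslates, biUnion_pair, ← union_assoc]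
  exact (hT.union (htranslate a) ha).union (htranslate b)
    (hb.mono (inter_subset_inter_left _ subset_union_left))

lemma le_add_one_of_preimage_eq_pair (hS : IsPathConnected S) (hT : IsPathConnected T)
    (hS₁ : 1 ∉ horizontalShifts S S) (hT₁ : 1 ∉ horizontalShifts T T) {a b : ℤ}
    (hST : Int.cast ⁻¹' horizontalShifts S T = {a, b}) : b ≤ a + 1 := by
  by_contra! hab
  have ha : (a : ℝ) ∈ horizontalShifts S T := hST.ge (mem_insert a _)
  have hb : (b : ℝ) ∈ horizontalShifts S T := hST.ge (mem_insert_of_mem a rfl)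
  let W := T ∪ integerTranslates S {a, b}
  have hsub (m : ℤ) (hm : (m : ℝ) ∈ horizontalShifts W W) : m = 0 ∨ m = b - a ∨ m = a - b := by
    obtain ⟨c, hc, d, hd, rfl⟩ := mem_sub_of_intCast_mem_horizontalShifts_union
      (fun k => eq_zero_of_intCast_mem_horizontalShifts hS hS₁)
      (fun k => eq_zero_of_intCast_mem_horizontalShifts hT hT₁) (insert_nonempty a {b})
      (fun k hk => hST.le hk) hm
    simp only [mem_insert_iff, mem_singleton_iff] at hc hd
    grind
  have hone : (1 : ℝ) ∉ horizontalShifts W W := fun h => by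
    have := hsub 1 (by simpa using h)
    omega
  have hpred : ((b - a - 1 : ℤ) : ℝ) ∉ horizontalShifts W W := fun h => by
    have := hsub _ h
    omega
  have hW := isPathConnected_union_integerTranslates_pair hS hT ha hb
  refine add_notMem_horizontalShifts hW ?_ one_pos hpred hone ?_
  · exact_mod_cast (by omega : 0 < b - a - 1)
  · obtain ⟨z, hz⟩ := hS.nonempty
    have hmem {c : ℤ} (hc : c ∈ ({a, b} : Set ℤ)) : z + ((c : ℝ), 0) ∈ W :=
      Or.inr (mem_integerTranslates.2 ⟨c, hc, z, hz, rfl⟩)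
    refine mem_horizontalShifts.2 ⟨_, hmem (mem_insert a _), ?_⟩
    convert hmem (mem_insert_of_mem a (mem_singleton b)) using 1
    ext <;> simp

end IntegerTranslates

section Crossing

lemma isPathConnected_range_of_Icc {X : Type*} [TopologicalSpace X] {a b : ℝ} (hab : a ≤ b)
    {f : Icc a b → X} (hf : Continuous f) : IsPathConnected (range f) :=
  have : PathConnectedSpace (Icc a b) := isPathConnected_iff_pathConnectedSpace.1 <|
    (convex_Icc a b).isPathConnected (nonempty_Icc.2 hab)
  isPathConnected_range hf

lemma exists_mem_mem_forall_Ioo_notMem {α : Type*} [LinearOrder α] [TopologicalSpace α]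
    [OrderClosedTopology α] [CompactIccSpace α] {A B : Set α} (hA : IsClosed A) (hB : IsClosed B)
    {x y : α} (hx : x ∈ A) (hy : y ∈ B) (hxy : x ≤ y) :
    ∃ s ∈ A, ∃ t ∈ B, s ≤ t ∧ ∀ r ∈ Ioo s t, r ∉ A ∧ r ∉ B := by
  obtain ⟨t, ⟨htB, hxt, hty⟩, ht⟩ :=
    (isCompact_Icc.inter_left hB).exists_isLeast ⟨y, hy, right_mem_Icc.2 hxy⟩
  obtain ⟨s, ⟨hsA, hxs, hst⟩, hs⟩ :=
    (isCompact_Icc.inter_left hA).exists_isGreatest ⟨x, hx, left_mem_Icc.2 hxt⟩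
  refine ⟨s, hsA, t, htB, hst, fun r hr => ⟨fun hrA => ?_, fun hrB => ?_⟩⟩
  · exact hr.1.not_ge (hs ⟨hrA, hxs.trans hr.1.le, hr.2.le⟩)
  · exact hr.2.not_ge (ht ⟨hrB, hxs.trans hr.1.le, hr.2.le.trans hty⟩)

variable {S T : Set (ℝ × ℝ)}

lemma exists_isPathConnected_preimage_eq_pair (hS : IsCompact S)
    (hSS : ∀ k : ℤ, (k : ℝ) ∈ horizontalShifts S S → k = 0) (hT : IsPathConnected T) {p i q : ℤ}
    (hpi : p < i) (hiq : i < q) (hp : (p : ℝ) ∈ horizontalShifts S T)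
    (hi : (i : ℝ) ∉ horizontalShifts S T) (hq : (q : ℝ) ∈ horizontalShifts S T) :
    ∃ U ⊆ T, IsPathConnected U ∧
      ∃ a < i, ∃ b > i, (Int.cast ⁻¹' horizontalShifts S U : Set ℤ) = {a, b} := by
  obtain ⟨z, hz, hzp⟩ := mem_horizontalShifts.1 hp
  obtain ⟨w, hw, hwq⟩ := mem_horizontalShifts.1 hq
  obtain ⟨γ, hγ⟩ := hT.joinedIn _ hzp _ hwq
  have hγT (r : ℝ) : γ.extend r ∈ T := hγ (projIcc 0 1 zero_le_one r)
  have hclosed (K : Set ℤ) := (isClosed_integerTranslates hS K).preimage γ.continuous_extend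
  obtain ⟨s, hs, t, ht, hst, havoid⟩ := exists_mem_mem_forall_Ioo_notMem (hclosed (Iio i))
    (hclosed (Ioi i)) (mem_integerTranslates.2 ⟨p, hpi, z, hz, γ.extend_zero.symm⟩)
    (mem_integerTranslates.2 ⟨q, hiq, w, hw, γ.extend_one.symm⟩) zero_le_one
  obtain ⟨a, ha, za, hza, hsa⟩ := mem_integerTranslates.1 hs
  obtain ⟨b, hb, zb, hzb, htb⟩ := mem_integerTranslates.1 ht
  refine ⟨γ.extend '' Icc s t, image_subset_iff.2 fun r _ => hγT r,
    ((convex_Icc s t).isPathConnected (nonempty_Icc.2 hst)).image γ.continuous_extend,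
    a, ha, b, hb, Subset.antisymm (fun l hl => ?_) ?_⟩
  · obtain ⟨x, hx, r, hr, hrx⟩ := mem_horizontalShifts.1 hl
    obtain rfl | rfl | hr := eq_endpoints_or_mem_Ioo_of_mem_Icc hr
    · exact Or.inl (eq_of_add_intCast_eq hSS hx hza (hrx.symm.trans hsa.symm))
    · exact Or.inr (eq_of_add_intCast_eq hSS hx hzb (hrx.symm.trans htb.symm))
    obtain hli | rfl | hil := lt_trichotomy l i
    · exact ((havoid r hr).1 (mem_integerTranslates.2 ⟨l, hli, x, hx, hrx.symm⟩)).elim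
    · exact (hi (mem_horizontalShifts.2 ⟨x, hx, hrx ▸ hγT r⟩)).elim
    · exact ((havoid r hr).2 (mem_integerTranslates.2 ⟨l, hil, x, hx, hrx.symm⟩)).elim
  · rintro _ (rfl | rfl)
    · exact mem_horizontalShifts.2 ⟨za, hza, s, left_mem_Icc.2 hst, hsa.symm⟩
    · exact mem_horizontalShifts.2 ⟨zb, hzb, t, right_mem_Icc.2 hst, htb.symm⟩

theorem ordConnected_preimage_horizontalShifts (hS : IsPathConnected S) (hT : IsPathConnected T)
    (hS₁ : 1 ∉ horizontalShifts S S) (hT₁ : 1 ∉ horizontalShifts T T) :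
    (Int.cast ⁻¹' horizontalShifts S T : Set ℤ).OrdConnected := by
  refine ⟨fun p hp q hq i hi => ?_⟩
  by_contra hiST
  have hpi : p < i := hi.1.lt_of_ne (by rintro rfl; exact hiST hp)
  have hiq : i < q := hi.2.lt_of_ne (by rintro rfl; exact hiST hq)
  obtain ⟨z, hz, hzp⟩ := mem_horizontalShifts.1 hp
  obtain ⟨w, hw, hwq⟩ := mem_horizontalShifts.1 hq
  obtain ⟨δ, hδ⟩ := hS.joinedIn z hz w hw
  have hδS : range δ ⊆ S := range_subset_iff.2 hδ
  have hδp := isPathConnected_range_of_Icc zero_le_one δ.continuous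
  have hδ₁ : 1 ∉ horizontalShifts (range δ) (range δ) :=
    fun h => hS₁ (horizontalShifts_mono hδS hδS h)
  obtain ⟨U, hUT, hU, a, ha, b, hb, hab⟩ := exists_isPathConnected_preimage_eq_pair
    (isCompact_range δ.continuous)
    (fun _ => eq_zero_of_intCast_mem_horizontalShifts hδp hδ₁) hT hpi hiq
    (mem_horizontalShifts.2 ⟨z, ⟨0, δ.source⟩, hzp⟩)
    (fun h => hiST (horizontalShifts_mono hδS subset_rfl h))
    (mem_horizontalShifts.2 ⟨w, ⟨1, δ.target⟩, hwq⟩)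
  have := le_add_one_of_preimage_eq_pair hδp hU hδ₁
    (fun h => hT₁ (horizontalShifts_mono hUT hUT h)) hab
  omega

end Crossing

theorem path_meets_translates_general {Γ Δ : Set (ℝ × ℝ)} (hΓ : IsPathConnected Γ)
    (hΔ : IsPathConnected Δ) (hdisj : Δ ∩ ((fun z : ℝ × ℝ => z + (1, 0)) '' Δ) = ∅) (j : ℕ)
    (h0 : (Γ ∩ Δ).Nonempty) (h1 : (Γ ∩ ((fun z : ℝ × ℝ => z + ((j : ℝ), 0)) '' Δ)).Nonempty) :
    (Γ ∩ ((fun z : ℝ × ℝ => z + (1, 0)) '' Γ)).Nonempty ∨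
      ∀ i : ℕ, i ≤ j → (Γ ∩ ((fun z : ℝ × ℝ => z + ((i : ℝ), 0)) '' Δ)).Nonempty := by
  refine or_iff_not_imp_left.2 fun hΓ₁ i hij => ?_
  have hconn := ordConnected_preimage_horizontalShifts hΔ hΓ (not_nonempty_iff_eq_empty.2 hdisj) hΓ₁
  have hmem₀ : (0 : ℤ) ∈ (Int.cast ⁻¹' horizontalShifts Δ Γ : Set ℤ) := by
    obtain ⟨z, hzΓ, hzΔ⟩ := h0
    exact mem_horizontalShifts.2 ⟨z, hzΔ, by simpa [← Prod.zero_eq_mk] using hzΓ⟩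
  have hmemj : (j : ℤ) ∈ (Int.cast ⁻¹' horizontalShifts Δ Γ : Set ℤ) := h1
  exact hconn.out hmem₀ hmemj ⟨i.cast_nonneg, Int.ofNat_le.2 hij⟩

/-- **Proposition 2.10.** Let `δ` be a segment disjoint from its translate by `(1,0)` and
`γ` a path joining `δ` to `δ + (j,0)`. Then either `γ` meets `γ + (1,0)`, or `γ` meets
every intermediate translate `δ + (i,0)`, `0 ≤ i ≤ j`. -/
theorem path_meets_translates
    (δ : Set.Icc (0 : ℝ) 1 → ℝ × ℝ) (hδc : Continuous δ) (hδi : Function.Injective δ)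
    (hdisj : Set.range δ ∩ ((fun z : ℝ × ℝ => z + (1, 0)) '' Set.range δ) = ∅)
    (γ : Set.Icc (0 : ℝ) 1 → ℝ × ℝ) (hγc : Continuous γ)
    (j : ℕ)
    (h0 : γ ⟨0, by norm_num⟩ ∈ Set.range δ)
    (h1 : γ ⟨1, by norm_num⟩ ∈ (fun z : ℝ × ℝ => z + ((j : ℝ), 0)) '' Set.range δ) :
    (∃ s t : Set.Icc (0 : ℝ) 1, γ s = γ t + (1, 0)) ∨
      ∀ i : ℕ, i ≤ j →
        (Set.range γ ∩ ((fun z : ℝ × ℝ => z + ((i : ℝ), 0)) '' Set.range δ)).Nonempty := by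
  exact (path_meets_translates_general (isPathConnected_range_of_Icc zero_le_one hγc)
    (isPathConnected_range_of_Icc zero_le_one hδc) hdisj j ⟨_, mem_range_self _, h0⟩
    ⟨_, mem_range_self _, h1⟩).imp_left
      fun ⟨_, ⟨s, hs⟩, _, ⟨t, ht⟩, hst⟩ => ⟨s, t, hs.trans (ht ▸ hst.symm)⟩
end
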